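/- Let G be a finitely generated metabelian group. There is a constant D depending only on G such that t(H^{ab}) < D^{[G:H]} for every subgroup H of finite index in G. -/

import Mathlib

/-- A group is metabelian if its derived subgroup is abelian. -/
def IsMetabelian (G : Type*) [Group G] : Prop :=
  ∀ x ∈ ⁅(⊤ : Subgroup G), (⊤ : Subgroup G)⁆, ∀ y ∈ ⁅(⊤ : Subgroup G), (⊤ : Subgroup G)⁆,
    x * y = y * x

/-!
Write `A = G'`, so that `Q = G ⧸ A` is a finitely generated abelian group and `ℤ[Q]` is noetherian.

For `N ≥ A` of finite index, the Magnus embedding identifies `N^{ab}` with a subgroup of the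
coinvariants under `N ⧸ A` of the Alexander module `M` of `G` relative to `A`. Fix a finite
presentation of `M` over `ℤ[Q]`, with `n` generators. It presents the coinvariants as the quotient
of `ℤ[G ⧸ N]^n ≅ ℤ^(n * [G : N])` by the translates of finitely many relations, all of them integral
vectors of `ℓ¹` norm at most some `C` independent of `N`. The order of the torsion subgroup of such
a quotient is bounded by a determinant of size `n * [G : N]` in these short vectors, hence by
`C ^ (n * [G : N])`.

For an arbitrary `H` of finite index put `N = H ⊔ A`. Every subgroup of `Q` is generated by at most
`d` elements, so `⁅N, A⁆` is contained in the image of `A ^ d` under `a ↦ ∏ i, ⁅h i, a i⁆` for some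
`h i ∈ H`. This map sends `(A ⊓ H) ^ d` into `H'`, so the kernel of `H^{ab} → N^{ab}`, which is
covered by `⁅N, A⁆ ⊓ H`, has order at most `[A : A ⊓ H] ^ d`, and this is exponential in `[G : H]`.
-/

open Module Submodule

section Determinant

variable {R S n : Type*} [CommRing R] [Nontrivial R] [CommRing S] [LinearOrder S]
  [IsStrictOrderedRing S] [Fintype n] [DecidableEq n]

theorem abv_det_le_prod_sum (abv : AbsoluteValue R S) (A : Matrix n n R) :
    abv A.det ≤ ∏ i, ∑ j, abv (A i j) :=
  calc abv A.det = abv (∑ σ : Equiv.Perm n, Equiv.Perm.sign σ • ∏ i, A i (σ i)) := by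
        rw [← Matrix.det_transpose, Matrix.det_apply]
        rfl
    _ ≤ ∑ σ : Equiv.Perm n, abv (Equiv.Perm.sign σ • ∏ i, A i (σ i)) := abv.sum_le _ _
    _ = ∑ σ : Equiv.Perm n, ∏ i, abv (A i (σ i)) := by
        simp only [abv.map_units_int_smul, map_prod]
    _ ≤ ∑ f : n → n, ∏ i, abv (A i (f i)) := by
        refine (Finset.sum_map Finset.univ ⟨_, DFunLike.coe_injective (F := Equiv.Perm n)⟩
          fun f : n → n ↦ ∏ i, abv (A i (f i))).symm.trans_le ?_
        exact Finset.sum_le_sum_of_subset_of_nonneg (Finset.subset_univ _)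
          fun f _ _ ↦ Finset.prod_nonneg fun i _ ↦ abv.nonneg _
    _ = ∏ i, ∑ j, abv (A i j) := by
        rw [Finset.prod_univ_sum, Fintype.piFinset_univ]

end Determinant

section ShortVectors

/-- The `ℓ¹` norm of an integral vector, with natural number values. -/
def l1Norm {ι : Type*} (v : ι →₀ ℤ) : ℕ := v.sum fun _ ↦ Int.natAbs

theorem l1Norm_eq_sum {ι : Type*} [Fintype ι] (v : ι →₀ ℤ) : l1Norm v = ∑ i, (v i).natAbs :=
  Finsupp.sum_fintype _ _ fun _ ↦ Int.natAbs_zero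

theorem l1Norm_single {ι : Type*} (i : ι) (c : ℤ) : l1Norm (.single i c) = c.natAbs :=
  Finsupp.sum_single_index Int.natAbs_zero

theorem l1Norm_add_le {ι : Type*} (u v : ι →₀ ℤ) : l1Norm (u + v) ≤ l1Norm u + l1Norm v := by
  classical
  have eq_sum {w : ι →₀ ℤ} (hw : w.support ⊆ u.support ∪ v.support) :
      l1Norm w = ∑ i ∈ u.support ∪ v.support, (w i).natAbs :=
    Finsupp.sum_of_support_subset w hw _ fun _ _ ↦ Int.natAbs_zero
  rw [eq_sum Finsupp.support_add, eq_sum Finset.subset_union_left,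
    eq_sum Finset.subset_union_right, ← Finset.sum_add_distrib]
  exact Finset.sum_le_sum fun i _ ↦ Int.natAbs_add_le _ _

theorem l1Norm_mapDomain_le {ι κ : Type*} (f : ι → κ) (v : ι →₀ ℤ) :
    l1Norm (v.mapDomain f) ≤ l1Norm v := by
  calc l1Norm (v.mapDomain f) ≤ ∑ i ∈ v.support, l1Norm (.single (f i) (v i)) :=
        Finset.le_sum_of_subadditive l1Norm Finsupp.sum_zero_index.le l1Norm_add_le _ _
    _ = l1Norm v := by simp only [l1Norm_single]; rfl

theorem natAbs_det_le_pow {n : Type*} [Fintype n] [DecidableEq n] {A : Matrix n n ℤ} {C : ℕ}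
    (hA : ∀ i, ∑ j, (A i j).natAbs ≤ C) : A.det.natAbs ≤ C ^ Fintype.card n := by
  have h := abv_det_le_prod_sum AbsoluteValue.abs A
  simp only [AbsoluteValue.abs_apply, Int.abs_eq_natAbs] at h
  calc A.det.natAbs ≤ ∏ i, ∑ j, (A i j).natAbs := by exact_mod_cast h
    _ ≤ C ^ Fintype.card n := Finset.prod_le_pow_card _ _ _ fun i _ ↦ hA i

theorem exists_linearIndepOn_span_range_le_torsion (R : Type*) {ι M : Type*} [CommRing R]
    [IsDomain R] [AddCommGroup M] [Module R M] (v : ι → M) :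
    ∃ s : Set ι, LinearIndepOn R v s ∧
      span R (Set.range v) ≤ (torsion R (M ⧸ span R (v '' s))).comap (mkQ _) := by
  obtain ⟨s, hs, hmax⟩ := exists_maximal_linearIndepOn R v
  refine ⟨s, hs, span_le.2 ?_⟩
  rintro _ ⟨i, rfl⟩
  obtain ⟨a, ha, hai⟩ : ∃ a : R, a ≠ 0 ∧ a • v i ∈ span R (v '' s) := by
    by_cases hi : i ∈ s
    · exact ⟨1, one_ne_zero, by simpa using subset_span (Set.mem_image_of_mem v hi)⟩
    · exact hmax i hi
  refine ⟨⟨a, mem_nonZeroDivisors_of_ne_zero ha⟩, ?_⟩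
  exact (Submodule.Quotient.mk_eq_zero _).2 hai

theorem disjoint_torsion_span_of_linearIndepOn {R ι M : Type*} [CommRing R] [IsDomain R]
    [AddCommGroup M] [Module R M] {v : ι → M} {s : Set ι} (hv : LinearIndepOn R v s) :
    Disjoint (torsion R M) (span R (v '' s)) := by
  have : IsTorsionFree R (span R (v '' s)) := by
    rw [Set.image_eq_range]
    exact (Basis.span hv).isTorsionFree
  rw [disjoint_def]
  rintro x ⟨a, hax⟩ hx
  have hax' : (a : R) • (⟨x, hx⟩ : span R (v '' s)) = 0 := Subtype.ext hax
  exact congrArg Subtype.val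
    ((smul_eq_zero.1 hax').resolve_left (nonZeroDivisors.coe_ne_zero a))

variable {ι F : Type*} [AddCommGroup F] (b : Basis ι ℤ F) {s : Set F}

include b in
theorem exists_linearIndependent_finite_quotient_span [Finite ι] [Finite (F ⧸ span ℤ s)] :
    ∃ w : ι → F, Set.range w ⊆ s ∧ LinearIndependent ℤ w ∧
      Finite (F ⧸ span ℤ (Set.range w)) := by
  have : Module.Finite ℤ F := .of_basis b
  have : Module.Free ℤ F := .of_basis b
  obtain ⟨t, ht, hst⟩ := exists_linearIndepOn_span_range_le_torsion ℤ (Subtype.val : s → F)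
  rw [Subtype.range_coe, Set.image_eq_range] at hst
  let w : t → F := fun i ↦ i
  have htors : Module.IsTorsion ℤ (F ⧸ span ℤ (Set.range w)) := by
    intro x
    obtain ⟨z, rfl⟩ := mkQ_surjective _ x
    have hz : (Nat.card (F ⧸ span ℤ s) : ℤ) • z ∈ span ℤ s := by
      rw [← Submodule.Quotient.mk_eq_zero, Submodule.Quotient.mk_smul, Nat.cast_smul_eq_nsmul]
      exact card_nsmul_eq_zero'
    obtain ⟨a, ha⟩ := hst hz
    rw [map_smul] at ha
    have hcard : (Nat.card (F ⧸ span ℤ s) : ℤ) ≠ 0 := mod_cast Nat.card_pos.ne'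
    exact ⟨a * ⟨_, mem_nonZeroDivisors_of_ne_zero hcard⟩, (mul_smul _ _ _).trans ha⟩
  have hfin : Finite (F ⧸ span ℤ (Set.range w)) := Module.finite_of_fg_torsion _ htors
  let basis : Basis t ℤ (span ℤ (Set.range w)) := Basis.span ht
  have : Finite t := Module.Finite.finite_basis basis
  obtain ⟨e⟩ : Nonempty (ι ≃ t) := by
    rw [← Finite.card_eq, ← finrank_eq_nat_card_basis b, ← finrank_eq_nat_card_basis basis]
    exact ((finiteQuotient_iff _).1 hfin).symm
  refine ⟨w ∘ e, ?_, ht.comp _ e.injective, ?_⟩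
  · rintro _ ⟨i, rfl⟩
    exact (e i).1.2
  · rwa [e.surjective.range_comp]

variable [Fintype ι] {C : ℕ}

theorem card_quotient_span_le_pow [Finite (F ⧸ span ℤ s)] (hs : ∀ v ∈ s, l1Norm (b.repr v) ≤ C) :
    Nat.card (F ⧸ span ℤ s) ≤ C ^ Fintype.card ι := by
  classical
  have : Module.Finite ℤ F := .of_basis b
  have : Module.Free ℤ F := .of_basis b
  obtain ⟨w, hws, hw, hfin⟩ := exists_linearIndependent_finite_quotient_span b (s := s)
  calc Nat.card (F ⧸ span ℤ s) ≤ Nat.card (F ⧸ span ℤ (Set.range w)) :=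
        Nat.card_le_card_of_surjective _ (factor_surjective (span_mono hws))
    _ = (b.det w).natAbs := by
        rw [← natAbs_det_basis_change b _ (Basis.span hw)]
        congr 2 with i
        simp [Basis.span_apply]
    _ ≤ C ^ Fintype.card ι := by
        rw [Basis.det_apply, ← Matrix.det_transpose]
        refine natAbs_det_le_pow fun i ↦ ?_
        exact (l1Norm_eq_sum _).symm.trans_le (hs _ (hws ⟨i, rfl⟩))

theorem card_torsion_quotient_span_le_pow (hC : 1 ≤ C) (hs : ∀ v ∈ s, l1Norm (b.repr v) ≤ C) :
    Finite (AddCommGroup.torsion (F ⧸ span ℤ s)) ∧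
      Nat.card (AddCommGroup.torsion (F ⧸ span ℤ s)) ≤ C ^ Fintype.card ι := by
  rw [← torsion_int]
  have : Module.Finite ℤ F := .of_basis b
  let e : ι → F ⧸ span ℤ s := mkQ _ ∘ b
  obtain ⟨t, ht, hspan⟩ := exists_linearIndepOn_span_range_le_torsion ℤ e
  let s' := s ∪ b '' t
  have hmap : span ℤ (e '' t) = (span ℤ s').map (mkQ (span ℤ s)) := by
    rw [span_union, Submodule.map_sup, map_span _ (b '' t), mkQ_map_self, bot_sup_eq,
      Set.image_comp]
  let equiv : ((F ⧸ span ℤ s) ⧸ span ℤ (e '' t)) ≃ₗ[ℤ] F ⧸ span ℤ s' :=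
    (quotEquivOfEq _ _ hmap).trans
      (quotientQuotientEquivQuotient _ _ (span_mono Set.subset_union_left))
  have : Finite ((F ⧸ span ℤ s) ⧸ span ℤ (e '' t)) := by
    refine Module.finite_of_fg_torsion _ fun x ↦ ?_
    obtain ⟨z, rfl⟩ := mkQ_surjective _ x
    apply hspan
    rw [Set.range_comp, ← map_span, b.span_eq, Submodule.map_top, range_mkQ]
    trivial
  have inj : Function.Injective ((span ℤ (e '' t)).mkQ.domRestrict (torsion ℤ _)) := by
    rw [LinearMap.injective_domRestrict_iff, ker_mkQ]
    exact disjoint_torsion_span_of_linearIndepOn ht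
  have : Finite (F ⧸ span ℤ s') := .of_equiv _ equiv.toEquiv
  have hs' : ∀ v ∈ s', l1Norm (b.repr v) ≤ C := by
    rintro _ (hv | ⟨i, -, rfl⟩)
    · exact hs _ hv
    · simpa [l1Norm_single] using hC
  refine ⟨.of_injective _ inj, (Nat.card_le_card_of_injective _ inj).trans ?_⟩
  rw [Nat.card_congr equiv.toEquiv]
  exact card_quotient_span_le_pow b hs'

end ShortVectors

section Torsion

@[to_additive card_addTorsion_le_card_ker_mul]
theorem card_torsion_le_card_ker_mul {K L : Type*} [CommGroup K] [CommGroup L] (f : K →* L)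
    [Finite f.ker] [Finite (CommGroup.torsion L)] :
    Finite (CommGroup.torsion K) ∧
      Nat.card (CommGroup.torsion K) ≤ Nat.card f.ker * Nat.card (CommGroup.torsion L) := by
  let g : CommGroup.torsion K →* CommGroup.torsion L :=
    (f.comp (CommGroup.torsion K).subtype).codRestrict _ fun x ↦ f.isOfFinOrder x.2
  let j : g.ker → f.ker := fun x ↦ ⟨x, congrArg Subtype.val x.2⟩
  have hj : Function.Injective j := fun x y h ↦
    Subtype.ext (Subtype.ext (congrArg (fun z : f.ker ↦ (z : K)) h))
  have : Finite g.ker := .of_injective j hj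
  have hcard : Nat.card (CommGroup.torsion K) = Nat.card g.ker * Nat.card g.range := by
    rw [← Subgroup.index_ker, Subgroup.card_mul_index]
  refine ⟨Nat.finite_of_card_ne_zero ?_, ?_⟩
  · exact hcard.trans_ne (Nat.mul_pos Nat.card_pos Nat.card_pos).ne'
  · rw [hcard]
    exact Nat.mul_le_mul (Nat.card_le_card_of_injective j hj) (Subgroup.card_le_card_group _)

@[to_additive card_addTorsion_le_of_injective]
theorem card_torsion_le_of_injective {K L : Type*} [CommGroup K] [CommGroup L] {f : K →* L}
    (hf : Function.Injective f) [Finite (CommGroup.torsion L)] :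
    Finite (CommGroup.torsion K) ∧
      Nat.card (CommGroup.torsion K) ≤ Nat.card (CommGroup.torsion L) := by
  have hker : f.ker = ⊥ := f.ker_eq_bot_iff.2 hf
  have : Finite f.ker := hker ▸ inferInstance
  simpa only [hker, Subgroup.card_bot, one_mul] using card_torsion_le_card_ker_mul f

end Torsion

section Coinvariants

open scoped MonoidAlgebra Pointwise

/-- Entrywise application of a ring homomorphism, as a semilinear map. -/
def mapVec {R S : Type*} [Ring R] [Ring S] (π : R →+* S) (ι : Type*) : (ι → R) →ₛₗ[π] (ι → S) where
  toFun v := π ∘ v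
  map_add' _ _ := funext fun _ ↦ map_add π _ _
  map_smul' _ _ := funext fun _ ↦ map_mul π _ _

section

variable {R S : Type*} [Ring R] [Ring S] {π : R →+* S} {ι : Type*}

theorem mapVec_surjective (hπ : Function.Surjective π) : Function.Surjective (mapVec π ι) :=
  hπ.comp_left

variable [Finite ι]

theorem ker_mapVec :
    LinearMap.ker (mapVec π ι) = RingHom.ker π • (⊤ : Submodule R (ι → R)) := by
  classical
  have := Fintype.ofFinite ι
  refine le_antisymm (fun v hv ↦ ?_) (smul_le.2 fun a ha v _ ↦ ?_)
  · rw [pi_eq_sum_univ' v]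
    exact sum_mem fun i _ ↦ smul_mem_smul (congrFun hv i) mem_top
  · rw [LinearMap.mem_ker, map_smulₛₗ, (ha : π a = 0), zero_smul]

theorem nonempty_quotient_ker_smul_top_addEquiv {M : Type*} [AddCommGroup M] [Module R M]
    (hπ : Function.Surjective π) {f : (ι → R) →ₗ[R] M} (hf : Function.Surjective f)
    {κ : Set (ι → R)} (hκ : span R κ = LinearMap.ker f) :
    Nonempty ((M ⧸ (RingHom.ker π • ⊤ : Submodule R M)) ≃+
      (ι → S) ⧸ span S (mapVec π ι '' κ)) := by
  have : RingHomSurjective π := ⟨hπ⟩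
  let p := (mkQ (RingHom.ker π • ⊤ : Submodule R M)).comp f
  let q := (mkQ (span S (mapVec π ι '' κ))).comp (mapVec π ι)
  have hker : LinearMap.ker p = LinearMap.ker q := by
    rw [LinearMap.ker_comp, LinearMap.ker_comp, ker_mkQ, ker_mkQ, ← map_span, comap_map_eq, hκ,
      ker_mapVec, ← LinearMap.range_eq_top.2 hf, ← Submodule.map_top, ← map_smul'', comap_map_eq,
      sup_comm]
  let ep := QuotientAddGroup.quotientKerEquivOfSurjective p.toAddMonoidHom
    ((mkQ_surjective _).comp hf)
  let eq := QuotientAddGroup.quotientKerEquivOfSurjective q.toAddMonoidHom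
    ((mkQ_surjective _).comp (mapVec_surjective hπ))
  exact ⟨ep.symm.trans ((QuotientAddGroup.quotientAddEquivOfEq
    (congrArg Submodule.toAddSubgroup hker)).trans eq)⟩

end

theorem span_range_monoidAlgebra_of (R G : Type*) [Semiring R] [Monoid G] :
    span R (Set.range (MonoidAlgebra.of R G)) = ⊤ := by
  rw [← (MonoidAlgebra.basis G R).span_eq]
  congr 2

theorem l1Norm_coeff_of_mul_le {G : Type*} [Group G] (g : G) (a : ℤ[G]) :
    l1Norm (MonoidAlgebra.of ℤ G g * a).coeff ≤ l1Norm a.coeff := by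
  have hmap : MonoidAlgebra.of ℤ G g * a = a.mapDomain (g * ·) := by
    induction a using MonoidAlgebra.induction_linear with
    | zero => simp
    | add a b ha hb => rw [mul_add, ha, hb, MonoidAlgebra.mapDomain_add]
    | single h c => simp
  rw [hmap, MonoidAlgebra.coeff_mapDomain]
  exact l1Norm_mapDomain_le _ _

theorem card_torsion_quotient_span_monoidAlgebra_le_pow {ι T : Type*} [Fintype ι] [Group T]
    [Finite T] {s : Set (ι → ℤ[T])} {C : ℕ} (hC : 1 ≤ C)
    (hs : ∀ v ∈ s, ∑ i, l1Norm (v i).coeff ≤ C) :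
    Finite (AddCommGroup.torsion ((ι → ℤ[T]) ⧸ span ℤ[T] s)) ∧
      Nat.card (AddCommGroup.torsion ((ι → ℤ[T]) ⧸ span ℤ[T] s)) ≤
        (C ^ Fintype.card ι) ^ Nat.card T := by
  have := Fintype.ofFinite T
  let b := Pi.basis fun _ : ι ↦ MonoidAlgebra.basis T ℤ
  have hshort : ∀ v ∈ Set.range (MonoidAlgebra.of ℤ T) • s, l1Norm (b.repr v) ≤ C := by
    rintro _ ⟨_, ⟨g, rfl⟩, v, hv, rfl⟩
    calc l1Norm (b.repr (MonoidAlgebra.of ℤ T g • v))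
        = ∑ i, l1Norm (MonoidAlgebra.of ℤ T g * v i).coeff := by
          simp only [l1Norm_eq_sum, Fintype.sum_sigma, b, Pi.basis_repr]
          rfl
      _ ≤ ∑ i, l1Norm (v i).coeff := Finset.sum_le_sum fun i _ ↦ l1Norm_coeff_of_mul_le g _
      _ ≤ C := hs v hv
  have hspan := span_smul_of_span_eq_top (span_range_monoidAlgebra_of ℤ T) s
  let e : ((ι → ℤ[T]) ⧸ span ℤ[T] s) ≃ₗ[ℤ]
      (ι → ℤ[T]) ⧸ span ℤ (Set.range (MonoidAlgebra.of ℤ T) • s) :=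
    (Submodule.Quotient.restrictScalarsEquiv ℤ _).symm.trans (quotEquivOfEq _ _ hspan.symm)
  obtain ⟨_, hcard⟩ := card_torsion_quotient_span_le_pow b hC hshort
  obtain ⟨hfin, hle⟩ :=
    card_addTorsion_le_of_injective (f := e.toLinearMap.toAddMonoidHom) e.injective
  refine ⟨hfin, (hle.trans hcard).trans_eq ?_⟩
  rw [Fintype.card_sigma, Finset.sum_const, smul_eq_mul, Finset.card_univ, pow_mul,
    Nat.card_eq_fintype_card]

/-- The coinvariants of a `ℤ[Q]`-module under the kernel of `σ : Q →* T`. The submodule divided out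
is spanned by the kernel of `ℤ[Q] → ℤ[T]` rather than by the elements `q • m - m` with `σ q = 1`. -/
abbrev KerCoinvariants {Q T : Type*} [Group Q] [Group T] (σ : Q →* T) (M : Type*) [AddCommGroup M]
    [Module ℤ[Q] M] : Type _ :=
  M ⧸ (RingHom.ker (MonoidAlgebra.mapDomainRingHom ℤ σ) • ⊤ : Submodule ℤ[Q] M)

theorem exists_card_torsion_kerCoinvariants_le_pow {Q M : Type*} [Group Q] [AddCommGroup M]
    [Module ℤ[Q] M] [Module.FinitePresentation ℤ[Q] M] :
    ∃ D : ℕ, 1 ≤ D ∧ ∀ {T : Type*} [Group T] [Finite T] (σ : Q →* T), Function.Surjective σ →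
      Finite (AddCommGroup.torsion (KerCoinvariants σ M)) ∧
        Nat.card (AddCommGroup.torsion (KerCoinvariants σ M)) ≤ D ^ Nat.card T := by
  obtain ⟨n, K, e, κ, hκ⟩ := Module.FinitePresentation.exists_fin ℤ[Q] M
  let C := 1 + ∑ v ∈ κ, ∑ i, l1Norm (v i).coeff
  have hC : 1 ≤ C := Nat.le_add_right _ _
  refine ⟨C ^ n, Nat.one_le_pow _ _ hC, fun σ hσ ↦ ?_⟩
  have hπ : Function.Surjective (MonoidAlgebra.mapDomainRingHom ℤ σ) := fun a ↦ by
    obtain ⟨v, hv⟩ := Finsupp.mapDomain_surjective hσ a.coeff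
    exact ⟨.ofCoeff v, MonoidAlgebra.coeff_injective hv⟩
  have hker : span ℤ[Q] κ = LinearMap.ker (e.symm.toLinearMap ∘ₗ K.mkQ) := by
    rw [LinearMap.ker_comp_of_ker_eq_bot _ e.symm.ker, ker_mkQ, hκ]
  obtain ⟨f⟩ := nonempty_quotient_ker_smul_top_addEquiv hπ
    (e.symm.surjective.comp K.mkQ_surjective) hker
  have hshort : ∀ v ∈ mapVec (MonoidAlgebra.mapDomainRingHom ℤ σ) (Fin n) '' κ,
      ∑ i, l1Norm (v i).coeff ≤ C := by
    rintro _ ⟨v, hv, rfl⟩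
    calc ∑ i, l1Norm (MonoidAlgebra.mapDomain σ (v i)).coeff
        ≤ ∑ i, l1Norm (v i).coeff := Finset.sum_le_sum fun i _ ↦ l1Norm_mapDomain_le σ _
      _ ≤ ∑ v ∈ κ, ∑ i, l1Norm (v i).coeff :=
          Finset.single_le_sum (f := fun v ↦ ∑ i, l1Norm (v i).coeff) (fun _ _ ↦ Nat.zero_le _) hv
      _ ≤ C := Nat.le_add_left _ _
  obtain ⟨_, hcard⟩ := card_torsion_quotient_span_monoidAlgebra_le_pow hC hshort
  obtain ⟨hfin, hle⟩ := card_addTorsion_le_of_injective (f := f.toAddMonoidHom) f.injective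
  rw [Fintype.card_fin] at hcard
  exact ⟨hfin, hle.trans hcard⟩

end Coinvariants

section MagnusEmbedding

open scoped MonoidAlgebra

variable {G : Type*} [Group G]

/-- The Alexander module of `G` relative to a normal subgroup `K`: the `ℤ[G ⧸ K]`-module generated
by symbols `δ g` for `g : G`, with relations `δ (g * h) = δ g + g • δ h`. It is the target of the
universal derivation `δ` from `G` to `ℤ[G ⧸ K]`-modules. -/
abbrev AlexanderModule (K : Subgroup G) [K.Normal] : Type _ :=
  (G →₀ ℤ[G ⧸ K]) ⧸ span ℤ[G ⧸ K] (Set.range fun p : G × G ↦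
    Finsupp.single (p.1 * p.2) 1 - Finsupp.single p.1 1 -
      Finsupp.single p.2 (MonoidAlgebra.of ℤ (G ⧸ K) p.1))

namespace AlexanderModule

/-- The universal derivation from `G` to its Alexander module. -/
noncomputable def δ (K : Subgroup G) [K.Normal] (g : G) : AlexanderModule K :=
  mkQ _ (Finsupp.single g 1)

variable (K : Subgroup G) [K.Normal]

theorem δ_mul (g h : G) : δ K (g * h) = δ K g + MonoidAlgebra.of ℤ (G ⧸ K) g • δ K h := by
  rw [← sub_eq_zero, ← sub_sub, δ, δ, δ, ← map_smul, ← map_sub, ← map_sub, Finsupp.smul_single,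
    smul_eq_mul, mul_one]
  exact (Submodule.Quotient.mk_eq_zero _).2 (subset_span ⟨(g, h), rfl⟩)

theorem δ_one : δ K 1 = 0 := by
  simpa [← MonoidAlgebra.one_def] using δ_mul K 1 1

theorem span_range_δ : span ℤ[G ⧸ K] (Set.range (δ K)) = ⊤ := by
  have hδ : δ K = mkQ _ ∘ Finsupp.basisSingleOne := by
    ext g
    rw [Function.comp_apply, Finsupp.coe_basisSingleOne, δ]
  rw [hδ, Set.range_comp, ← map_span, Basis.span_eq, Submodule.map_top, range_mkQ]

instance [Group.FG G] : Module.Finite ℤ[G ⧸ K] (AlexanderModule K) := by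
  classical
  obtain ⟨S, hS⟩ := Group.fg_def.1 ‹Group.FG G›
  refine ⟨⟨S.image (δ K), top_unique ?_⟩⟩
  rw [← span_range_δ, span_le, Finset.coe_image]
  rintro _ ⟨g, rfl⟩
  induction hS.ge (Subgroup.mem_top g) using Subgroup.closure_induction with
  | mem g hg => exact subset_span (Set.mem_image_of_mem _ hg)
  | one => rw [δ_one]; exact zero_mem _
  | mul g h _ _ hg hh => rw [δ_mul]; exact add_mem hg (smul_mem _ _ hh)
  | inv g _ hg =>
    have h := δ_mul K g⁻¹ g
    rw [inv_mul_cancel, δ_one] at h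
    rw [eq_neg_of_add_eq_zero_left h.symm]
    exact neg_mem (smul_mem _ _ hg)

theorem exists_linearMap_δ_eq {W : Type*} [AddCommGroup W] [Module ℤ[G ⧸ K] W] {d : G → W}
    (hd : ∀ g h : G, d (g * h) = d g + MonoidAlgebra.of ℤ (G ⧸ K) g • d h) :
    ∃ φ : AlexanderModule K →ₗ[ℤ[G ⧸ K]] W, ∀ g, φ (δ K g) = d g := by
  refine ⟨liftQ _ (Finsupp.linearCombination ℤ[G ⧸ K] d) (span_le.2 ?_), fun g ↦ ?_⟩
  · rintro _ ⟨⟨g, h⟩, rfl⟩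
    simp [hd]
  · simp [δ]

end AlexanderModule

theorem mkQ_of_smul_eq {Q T M : Type*} [Group Q] [Group T] [AddCommGroup M] [Module ℤ[Q] M]
    {σ : Q →* T} {q : Q} (hq : σ q = 1) (m : M) :
    (mkQ _ (MonoidAlgebra.of ℤ Q q • m) : KerCoinvariants σ M) = mkQ _ m := by
  have hker : MonoidAlgebra.of ℤ Q q - 1 ∈ RingHom.ker (MonoidAlgebra.mapDomainRingHom ℤ σ) := by
    rw [RingHom.mem_ker, map_sub, map_one]
    simp [hq, MonoidAlgebra.one_def]
  refine (Submodule.Quotient.eq _).2 ?_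
  simpa only [sub_smul, one_smul] using smul_mem_smul hker (mem_top (x := m))

/-- Right translation as a representation of `T` on the functions from `T` to `A`. -/
def rightTranslation (T A : Type*) [Group T] [AddCommGroup A] : Representation ℤ T (T → A) where
  toFun t := LinearMap.funLeft ℤ A (· * t)
  map_one' := by ext; simp
  map_mul' s t := by ext; simp [mul_assoc]

theorem map_eq_zero_of_mem_ker_mapDomain_smul_top {Q T A M : Type*} [Group Q] [Group T]
    [AddCommGroup A] [AddCommGroup M] [Module ℤ[Q] M] {σ : Q →* T} {ρ : Representation ℤ T A}
    (φ : M →ₗ[ℤ[Q]] Representation.asModule (ρ.comp σ)) {x : M}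
    (hx : x ∈ (RingHom.ker (MonoidAlgebra.mapDomainRingHom ℤ σ) • ⊤ : Submodule ℤ[Q] M)) :
    φ x = 0 := by
  have hcomp : Representation.asAlgebraHom (ρ.comp σ) =
      ρ.asAlgebraHom.comp (MonoidAlgebra.mapDomainAlgHom ℤ ℤ σ) := by
    ext; simp
  refine smul_induction_on hx (fun a ha m _ ↦ ?_) fun x y hx hy ↦ ?_
  · have hzero : Representation.asAlgebraHom (ρ.comp σ) a = 0 := by
      rw [hcomp]
      exact (congrArg ρ.asAlgebraHom ha).trans (map_zero _)
    rw [map_smul]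
    exact LinearMap.congr_fun hzero _
  · rw [map_add, hx, hy, add_zero]

section Schreier

variable (N : Subgroup G) [N.Normal]

/-- The Schreier cocycle of a normal subgroup `N`: right multiplication by `g` sends the coset
representative of `x` to that of `x * g`, up to this element of `N`. -/
noncomputable def schreierCocycle (g : G) (x : G ⧸ N) : N :=
  ⟨x.out * g * (x * g).out⁻¹, (QuotientGroup.eq_one_iff _).1 (by simp)⟩

theorem schreierCocycle_mul (g h : G) (x : G ⧸ N) :
    schreierCocycle N (g * h) x = schreierCocycle N g x * schreierCocycle N h (x * g) := by
  ext
  simp [schreierCocycle, mul_assoc]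

theorem isConj_schreierCocycle_one (n : N) : IsConj n (schreierCocycle N n 1) := by
  have hout : (1 : G ⧸ N).out ∈ N := (QuotientGroup.eq_one_iff _).1 (Quotient.out_eq' _)
  refine isConj_iff.2 ⟨⟨_, hout⟩, ?_⟩
  ext
  simp [schreierCocycle, (QuotientGroup.eq_one_iff (n : G)).2 n.2]

end Schreier

open AlexanderModule

variable {K N : Subgroup G} [K.Normal] [N.Normal]

theorem abelianization_of_eq_one_of_δ_mem (hKN : K ≤ N) {n : N}
    (hn : δ K n ∈ (RingHom.ker (MonoidAlgebra.mapDomainRingHom ℤ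
      (QuotientGroup.map K N (.id G) hKN)) • ⊤ : Submodule ℤ[G ⧸ K] (AlexanderModule K))) :
    Abelianization.of n = 1 := by
  let ρ := rightTranslation (G ⧸ N) (Additive (Abelianization N))
  let σ := QuotientGroup.map K N (.id G) hKN
  let d : G → G ⧸ N → Additive (Abelianization N) :=
    fun g x ↦ .ofMul (Abelianization.of (schreierCocycle N g x))
  have hd (g h : G) : d (g * h) = d g + (ρ.comp σ) g (d h) := by
    ext x
    exact congrArg Additive.ofMul
      ((congrArg Abelianization.of (schreierCocycle_mul N g h x)).trans (map_mul _ _ _))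
  obtain ⟨φ, hφ⟩ := exists_linearMap_δ_eq K (W := Representation.asModule (ρ.comp σ)) (d := d)
    fun g h ↦ (hd g h).trans
      (congrArg (d g + ·) (Representation.asModuleEquiv_symm_map_rho (ρ.comp σ) g (d h)))
  have hdn : d n = 0 := (hφ n).symm.trans (map_eq_zero_of_mem_ker_mapDomain_smul_top φ hn)
  have hconj := Abelianization.of.map_isConj (isConj_schreierCocycle_one N n)
  rw [isConj_iff_eq] at hconj
  exact hconj.trans (congrFun hdn 1)

theorem exists_injective_abelianization_to_kerCoinvariants (hKN : K ≤ N) :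
    ∃ f : Abelianization N →* Multiplicative
      (KerCoinvariants (QuotientGroup.map K N (.id G) hKN) (AlexanderModule K)),
      Function.Injective f := by
  let σ := QuotientGroup.map K N (.id G) hKN
  let f : N →* Multiplicative (KerCoinvariants σ (AlexanderModule K)) :=
    { toFun n := .ofAdd (mkQ _ (δ K n))
      map_one' := by
        rw [Subgroup.coe_one, δ_one, map_zero, ofAdd_zero]
      map_mul' n m := by
        rw [← ofAdd_add, Subgroup.coe_mul, δ_mul, map_add]
        refine congrArg (fun x ↦ Multiplicative.ofAdd (mkQ _ (δ K n) + x)) ?_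
        exact mkQ_of_smul_eq ((QuotientGroup.eq_one_iff (n : G)).2 n.2) _ }
  refine ⟨Abelianization.lift f, (injective_iff_map_eq_one _).2 fun x hx ↦ ?_⟩
  obtain ⟨n, rfl⟩ := QuotientGroup.mk_surjective x
  exact abelianization_of_eq_one_of_δ_mem hKN ((Submodule.Quotient.mk_eq_zero _).1 hx)

theorem exists_card_torsion_abelianization_le_pow [Group.FG G] (K : Subgroup G) [K.Normal]
    [IsNoetherianRing ℤ[G ⧸ K]] :
    ∃ D : ℕ, 1 ≤ D ∧ ∀ (N : Subgroup G) [N.Normal] [N.FiniteIndex], K ≤ N →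
      Finite (CommGroup.torsion (Abelianization N)) ∧
        Nat.card (CommGroup.torsion (Abelianization N)) ≤ D ^ N.index := by
  have : Module.FinitePresentation ℤ[G ⧸ K] (AlexanderModule K) :=
    Module.finitePresentation_of_finite _ _
  obtain ⟨D, hD, h⟩ :=
    exists_card_torsion_kerCoinvariants_le_pow (Q := G ⧸ K) (M := AlexanderModule K)
  refine ⟨D, hD, fun N _ _ hKN ↦ ?_⟩
  obtain ⟨f, hf⟩ := exists_injective_abelianization_to_kerCoinvariants hKN
  let σ := QuotientGroup.map K N (.id G) hKN
  have hσ : Function.Surjective σ :=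
    QuotientGroup.map_surjective_of_surjective _ _ _ QuotientGroup.mk_surjective hKN
  obtain ⟨hfin, hcard⟩ := h σ hσ
  let e : AddCommGroup.torsion (KerCoinvariants σ (AlexanderModule K)) ≃
      CommGroup.torsion (Multiplicative (KerCoinvariants σ (AlexanderModule K))) :=
    Multiplicative.ofAdd.subtypeEquiv fun _ ↦ isOfFinOrder_ofAdd_iff.symm
  have := Finite.of_equiv _ e
  obtain ⟨hfinN, hcardN⟩ := card_torsion_le_of_injective hf
  exact ⟨hfinN, hcardN.trans ((Nat.card_congr e).symm.trans_le hcard)⟩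

end MagnusEmbedding

section Comparison

open scoped commutatorElement IsMulCommutative

variable {G : Type*} [Group G]

theorem commutator_sup_self_le (H A : Subgroup G) [hA : A.Normal] :
    ⁅H ⊔ A, H ⊔ A⁆ ≤ ⁅H, H⁆ ⊔ ⁅H ⊔ A, A⁆ := by
  rw [Subgroup.commutator_le]
  intro u hu v hv
  obtain ⟨p, hp, a, ha, rfl⟩ := Subgroup.mem_sup_of_normal_right.1 hu
  obtain ⟨q, hq, b, hb, rfl⟩ := Subgroup.mem_sup_of_normal_right.1 hv
  have conj_mem {g x c : G} (hg : g ∈ H) (hx : x ∈ H ⊔ A) (hc : c ∈ A) :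
      g * ⁅x, c⁆ * g⁻¹ ∈ ⁅H ⊔ A, A⁆ := by
    have hg' : g ∈ H ⊔ A := Subgroup.mem_sup_left hg
    rw [conjugate_commutatorElement]
    exact Subgroup.commutator_mem_commutator (mul_mem (mul_mem hg' hx) (inv_mem hg'))
      (hA.conj_mem c hc g)
  have key : ⁅p * a, q * b⁆ = (p * ⁅q * b, a⁆ * p⁻¹)⁻¹ * (⁅p, q⁆ * (q * ⁅p, b⁆ * q⁻¹)) := by
    simp only [commutatorElement_def]
    group
  rw [key]
  exact mul_mem (inv_mem (Subgroup.mem_sup_right (conj_mem hp hv ha)))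
    (mul_mem (Subgroup.mem_sup_left (Subgroup.commutator_mem_commutator hp hq))
      (Subgroup.mem_sup_right (conj_mem hq (Subgroup.mem_sup_left hp) hb)))

section CommutatorHom

variable (A : Subgroup G) [A.Normal] [IsMulCommutative A]

/-- The endomorphism `a ↦ ⁅g, a⁆` of an abelian normal subgroup `A`. -/
noncomputable def commutatorHom (g : G) : A →* A :=
  (MulAut.conjNormal g).toMonoidHom / MonoidHom.id A

theorem coe_commutatorHom (g : G) (a : A) : (commutatorHom A g a : G) = ⁅g, (a : G)⁆ := by
  rw [commutatorElement_def, commutatorHom, MonoidHom.div_apply, Subgroup.coe_div,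
    div_eq_mul_inv]
  rfl

variable {ι : Type*} [Fintype ι] (h : ι → G)

/-- The homomorphism `a ↦ ∏ i, ⁅h i, a i⁆`. -/
noncomputable def commutatorProdHom : (ι → A) →* A :=
  ∏ i, (commutatorHom A (h i)).comp (Pi.evalMonoidHom _ i)

theorem commutatorProdHom_apply (a : ι → A) :
    commutatorProdHom A h a = ∏ i, commutatorHom A (h i) (a i) := by
  simp [commutatorProdHom]

theorem commutatorProdHom_mulSingle [DecidableEq ι] (i : ι) (a : A) :
    commutatorProdHom A h (Pi.mulSingle i a) = commutatorHom A (h i) a := by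
  rw [commutatorProdHom_apply, Fintype.prod_eq_single i, Pi.mulSingle_eq_same]
  intro j hj
  rw [Pi.mulSingle_eq_of_ne hj, map_one]

theorem commutator_closure_sup_le_range_commutatorProdHom :
    ⁅Subgroup.closure (Set.range h) ⊔ A, A⁆ ≤ (commutatorProdHom A h).range.map A.subtype := by
  classical
  let S : Subgroup G :=
    { carrier := {g | ∀ a, commutatorHom A g a ∈ (commutatorProdHom A h).range}
      one_mem' a := by
        have : commutatorHom A 1 a = 1 := Subtype.ext (by simp [coe_commutatorHom])
        exact this ▸ one_mem _
      mul_mem' {g k} hg hk a := by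
        have : commutatorHom A (g * k) a =
            commutatorHom A g (MulAut.conjNormal k a) * commutatorHom A k a := by
          ext
          simp [coe_commutatorHom, commutatorElement_def, mul_assoc]
        exact this ▸ mul_mem (hg _) (hk _)
      inv_mem' {g} hg a := by
        have : commutatorHom A g⁻¹ a = (commutatorHom A g (MulAut.conjNormal g⁻¹ a))⁻¹ := by
          ext
          simp [coe_commutatorHom, commutatorElement_def, mul_assoc]
        exact this ▸ inv_mem (hg _) }
  have hhS : Set.range h ⊆ S := by
    rintro _ ⟨i, rfl⟩ a
    exact ⟨Pi.mulSingle i a, commutatorProdHom_mulSingle A h i a⟩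
  have hAS : A ≤ S := fun g hg a ↦ by
    have : commutatorHom A g a = 1 := by
      ext
      rw [coe_commutatorHom, Subgroup.coe_one, commutatorElement_eq_one_iff_mul_comm]
      exact congrArg Subtype.val (mul_comm ⟨g, hg⟩ a)
    exact this ▸ one_mem _
  refine Subgroup.commutator_le.2 fun g hg a ha ↦ ?_
  exact ⟨_, sup_le ((Subgroup.closure_le S).2 hhS) hAS hg ⟨a, ha⟩, coe_commutatorHom A g ⟨a, ha⟩⟩

theorem relIndex_commutator_range_commutatorProdHom_dvd {H : Subgroup G} (hh : ∀ i, h i ∈ H) :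
    ⁅H, H⁆.relIndex ((commutatorProdHom A h).range.map A.subtype) ∣
      H.relIndex A ^ Fintype.card ι := by
  have hle : Subgroup.pi Set.univ (fun _ ↦ H.subgroupOf A) ≤
      (⁅H, H⁆.subgroupOf A).comap (commutatorProdHom A h) := by
    intro a ha
    rw [Subgroup.mem_comap, commutatorProdHom_apply]
    refine Subgroup.prod_mem _ fun i _ ↦ ?_
    rw [Subgroup.mem_subgroupOf, coe_commutatorHom]
    exact Subgroup.commutator_mem_commutator (hh i) (ha i (Set.mem_univ i))
  have := Subgroup.index_dvd_of_le hle
  rw [Subgroup.index_pi, Finset.prod_const, Finset.card_univ, Subgroup.index_comap] at this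
  rwa [← Subgroup.relIndex_comap]

end CommutatorHom

theorem abelianization_of_eq_one_iff {H : Subgroup G} {k : H} :
    Abelianization.of k = 1 ↔ (k : G) ∈ ⁅H, H⁆ := by
  rw [← MonoidHom.mem_ker, Abelianization.ker_of, ← Subgroup.map_subtype_commutator]
  exact (Subgroup.mem_map_iff_mem Subtype.val_injective).symm

theorem ker_abelianization_map_inclusion_le (H A : Subgroup G) [A.Normal] :
    (Abelianization.map (Subgroup.inclusion (le_sup_left : H ≤ H ⊔ A))).ker ≤
      (⁅H ⊔ A, A⁆.subgroupOf H).map Abelianization.of := by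
  intro x hx
  obtain ⟨k, rfl⟩ := QuotientGroup.mk_surjective x
  have hk : (k : G) ∈ ⁅H, H⁆ ⊔ ⁅H ⊔ A, A⁆ :=
    commutator_sup_self_le H A (abelianization_of_eq_one_iff.1 hx)
  have hnorm : ⁅H, H⁆ ≤ Subgroup.normalizer (⁅H ⊔ A, A⁆ : Subgroup G) :=
    (Subgroup.commutator_le_self H).trans
      (le_sup_left.trans (Subgroup.normalizer_commutator_ge_left _ _))
  rw [← SetLike.mem_coe, Subgroup.coe_mul_of_left_le_normalizer_right _ _ hnorm] at hk
  obtain ⟨p, hp, y, hy, hpy⟩ := hk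
  let p' : H := ⟨p, Subgroup.commutator_le_self H hp⟩
  have hk' : p'⁻¹ * k ∈ ⁅H ⊔ A, A⁆.subgroupOf H := by
    rw [Subgroup.mem_subgroupOf, Subgroup.coe_mul, ← hpy]
    simpa [p'] using hy
  refine ⟨_, hk', ?_⟩
  rw [map_mul, map_inv, abelianization_of_eq_one_iff.2 hp, inv_one, one_mul]
  rfl

theorem card_map_abelianization_of_subgroupOf (H Y : Subgroup G) :
    Nat.card ((Y.subgroupOf H).map Abelianization.of) = ⁅H, H⁆.relIndex (Y ⊓ H) := by
  rw [← Subgroup.relIndex_ker, Abelianization.ker_of, ← Subgroup.map_subtype_commutator,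
    ← Subgroup.subgroupOf_map_subtype,
    Subgroup.relIndex_map_map_of_injective _ _ H.subtype_injective]

theorem card_torsion_abelianization_le_relIndex_pow_mul {H A : Subgroup G} [A.Normal]
    [IsMulCommutative A] [H.IsFiniteRelIndex A] {s : Finset G} (hsH : (s : Set G) ⊆ H)
    (hHs : H ≤ Subgroup.closure s ⊔ A) [Finite (CommGroup.torsion (Abelianization ↥(H ⊔ A)))] :
    Nat.card (CommGroup.torsion (Abelianization H)) ≤
      H.relIndex A ^ s.card * Nat.card (CommGroup.torsion (Abelianization ↥(H ⊔ A))) := by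
  let φ := Abelianization.map (Subgroup.inclusion (le_sup_left : H ≤ H ⊔ A))
  let I := (⁅H ⊔ A, A⁆.subgroupOf H).map Abelianization.of
  let R := (commutatorProdHom A (Subtype.val : s → G)).range.map A.subtype
  have hker : φ.ker ≤ I := ker_abelianization_map_inclusion_le H A
  have hI : Nat.card I = ⁅H, H⁆.relIndex (⁅H ⊔ A, A⁆ ⊓ H) :=
    card_map_abelianization_of_subgroupOf _ _
  have hcomm : ⁅H ⊔ A, A⁆ ⊓ H ≤ R := by
    refine inf_le_left.trans
      (le_trans ?_ (commutator_closure_sup_le_range_commutatorProdHom A Subtype.val))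
    rw [Subtype.range_coe]
    exact Subgroup.commutator_mono (sup_le hHs le_sup_right) le_rfl
  have hR : ⁅H, H⁆.relIndex R ∣ H.relIndex A ^ s.card := by
    rw [← Fintype.card_coe]
    exact relIndex_commutator_range_commutatorProdHom_dvd A _ fun g ↦ hsH g.2
  have hpow : H.relIndex A ^ s.card ≠ 0 := pow_ne_zero _ Subgroup.relIndex_ne_zero
  have hR0 : ⁅H, H⁆.relIndex R ≠ 0 := ne_zero_of_dvd_ne_zero hpow hR
  have : Finite I := by
    refine Nat.finite_of_card_ne_zero ?_
    rw [hI]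
    exact mt (Subgroup.relIndex_eq_zero_of_le_right hcomm) hR0
  have : Finite φ.ker := Finite.Set.subset (I : Set (Abelianization H)) hker
  refine (card_torsion_le_card_ker_mul φ).2.trans (Nat.mul_le_mul_right _ ?_)
  calc Nat.card φ.ker ≤ Nat.card I := Subgroup.card_le_of_le hker
    _ = ⁅H, H⁆.relIndex (⁅H ⊔ A, A⁆ ⊓ H) := hI
    _ ≤ ⁅H, H⁆.relIndex R := Subgroup.relIndex_le_of_le_right hcomm hR0
    _ ≤ H.relIndex A ^ s.card := Nat.le_of_dvd (Nat.pos_of_ne_zero hpow) hR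

end Comparison

section BoundedGeneration

theorem spanFinrank_le_spanFinrank_top {R M : Type*} [CommRing R] [IsDomain R]
    [IsPrincipalIdealRing R] [AddCommGroup M] [Module R M] [Module.Finite R M]
    (P : Submodule R M) : P.spanFinrank ≤ (⊤ : Submodule R M).spanFinrank := by
  obtain ⟨s, hcard, hs⟩ :=
    (Module.Finite.fg_top (R := R) (M := M)).exists_span_finset_card_eq_spanFinrank
  let f := Fintype.linearCombination R (Subtype.val : s → M)
  have hf : LinearMap.range f = ⊤ := by
    rw [Fintype.range_linearCombination, Subtype.range_coe]
    exact hs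
  calc P.spanFinrank = ((P.comap f).map f).spanFinrank := by
        rw [map_comap_eq_of_surjective (LinearMap.range_eq_top.1 hf)]
    _ ≤ (P.comap f).spanFinrank := spanFinrank_map_le_of_fg f (IsNoetherian.noetherian _)
    _ = finrank R (P.comap f) := by
        rw [Module.finrank_eq_spanFinrank_of_free, spanFinrank_top]
    _ ≤ finrank R (s → R) := Submodule.finrank_le _
    _ = (⊤ : Submodule R M).spanFinrank := by
        rw [finrank_fintype_fun_eq_card, Fintype.card_coe, hcard]

theorem exists_finset_card_le_closure_eq (Q : Type*) [CommGroup Q] [Group.FG Q] :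
    ∃ d : ℕ, ∀ P : Subgroup Q, ∃ s : Finset Q, s.card ≤ d ∧ Subgroup.closure (s : Set Q) = P := by
  have : Module.Finite ℤ (Additive Q) := Module.Finite.iff_addGroup_fg.2 inferInstance
  refine ⟨(⊤ : Submodule ℤ (Additive Q)).spanFinrank, fun P ↦ ?_⟩
  let P' := AddSubgroup.toIntSubmodule (Subgroup.toAddSubgroup P)
  obtain ⟨s, hcard, hs⟩ := (IsNoetherian.noetherian P').exists_span_finset_card_eq_spanFinrank
  refine ⟨s.map Additive.toMul.toEmbedding,
    (s.card_map _).trans_le (hcard.trans_le (spanFinrank_le_spanFinrank_top P')), ?_⟩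
  have : AddSubgroup.closure (s : Set (Additive Q)) = Subgroup.toAddSubgroup P := by
    rw [← span_int_eq_addSubgroupClosure, hs]
    rfl
  apply Subgroup.toAddSubgroup.injective
  rw [← this, Subgroup.toAddSubgroup_closure]
  congr 1
  ext x
  simp

theorem exists_finset_card_le_closure_sup_commutator (G : Type*) [Group G] [Group.FG G] :
    ∃ d : ℕ, ∀ H : Subgroup G, ∃ s : Finset G, s.card ≤ d ∧ (s : Set G) ⊆ H ∧
      H ≤ Subgroup.closure s ⊔ commutator G := by
  classical
  have : Group.FG (Abelianization G) :=
    Group.fg_of_surjective (f := Abelianization.of) QuotientGroup.mk_surjective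
  obtain ⟨d, hd⟩ := exists_finset_card_le_closure_eq (Abelianization G)
  refine ⟨d, fun H ↦ ?_⟩
  obtain ⟨t, ht, htH⟩ := hd (H.map Abelianization.of)
  have hsub : (t : Set (Abelianization G)) ⊆ Abelianization.of '' (H : Set G) := by
    rw [← Subgroup.coe_map, ← htH]
    exact Subgroup.subset_closure
  obtain ⟨s, hsH, hinj, rfl⟩ := Finset.exists_subset_injOn_image_eq_of_surjOn _ _ hsub
  refine ⟨s, (Finset.card_image_of_injOn hinj).symm.trans_le ht, hsH, ?_⟩
  rw [← Abelianization.ker_of, ← Subgroup.comap_map_eq, ← Subgroup.map_le_iff_le_comap,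
    MonoidHom.map_closure, ← htH, Finset.coe_image]

end BoundedGeneration

theorem pow_mul_pow_lt_pow {k l m n d C : ℕ} (hn : n ≤ d) (hk : k ≤ m) (hl : l ≤ m)
    (hm : m ≠ 0) (hC : 1 ≤ C) : k ^ n * C ^ l < (2 ^ d * C + 1) ^ m :=
  calc k ^ n * C ^ l ≤ (2 ^ m) ^ d * C ^ m := by
        gcongr ?_ * ?_
        · exact (Nat.pow_le_pow_left (hk.trans m.lt_two_pow_self.le) n).trans
            (Nat.pow_le_pow_right (by positivity) hn)
        · exact Nat.pow_le_pow_right hC hl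
    _ = (2 ^ d * C) ^ m := by rw [mul_pow, ← pow_mul, ← pow_mul, mul_comm m]
    _ < (2 ^ d * C + 1) ^ m := Nat.pow_lt_pow_left (Nat.lt_succ_self _) hm

theorem isNoetherianRing_monoidAlgebra_of_fg (R Q : Type*) [CommRing R] [IsNoetherianRing R]
    [CommGroup Q] [Group.FG Q] : IsNoetherianRing (MonoidAlgebra R Q) :=
  have : Monoid.FG Q := Group.fg_iff_monoid_fg.1 inferInstance
  Algebra.FiniteType.isNoetherianRing R _

theorem stmt_10 (G : Type*) [Group G] [Group.FG G] (hG : IsMetabelian G) :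
    ∃ D : ℕ, ∀ H : Subgroup G, H.index ≠ 0 →
      Nat.card (CommGroup.torsion (Abelianization H)) < D ^ H.index := by
  let A := commutator G
  have : Group.FG (Abelianization G) := QuotientGroup.fg _
  have : IsNoetherianRing (MonoidAlgebra ℤ (G ⧸ A)) :=
    isNoetherianRing_monoidAlgebra_of_fg ℤ (Abelianization G)
  have : IsMulCommutative A := .of_setLike_mul_comm hG
  obtain ⟨d, hd⟩ := exists_finset_card_le_closure_sup_commutator G
  obtain ⟨C, hC, hCN⟩ := exists_card_torsion_abelianization_le_pow A
  refine ⟨2 ^ d * C + 1, fun H hH ↦ ?_⟩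
  have : H.FiniteIndex := ⟨hH⟩
  have : H.IsFiniteRelIndex A := Subgroup.isFiniteRelIndex_of_finiteIndex
  have : (H ⊔ A).FiniteIndex := Subgroup.finiteIndex_of_le le_sup_left
  have : (H ⊔ A).Normal := .of_commutator_le G le_sup_right
  obtain ⟨s, hsd, hsH, hHs⟩ := hd H
  obtain ⟨_, hcard⟩ := hCN (H ⊔ A) le_sup_right
  have hHA : H.relIndex A ≤ H.index := by
    simpa using Subgroup.relIndex_le_of_le_right le_top (H.relIndex_top_right.trans_ne hH)
  calc Nat.card (CommGroup.torsion (Abelianization H))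
      ≤ H.relIndex A ^ s.card * Nat.card (CommGroup.torsion (Abelianization ↥(H ⊔ A))) :=
        card_torsion_abelianization_le_relIndex_pow_mul hsH hHs
    _ ≤ H.relIndex A ^ s.card * C ^ (H ⊔ A).index := Nat.mul_le_mul_left _ hcard
    _ < (2 ^ d * C + 1) ^ H.index :=
        pow_mul_pow_lt_pow hsd hHA (Subgroup.index_antitone le_sup_left) hH hC
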